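/- Let n ≥ 1, let X be a Besicovitch metric space, x₀ ∈ X, r > 0, B = B(x₀, r), B̃ = B(x₀, 3^{n+1}r), let μ be a Radon measure on X which is D-Federer on B̃ for some D > 0 (i.e. μ(B(y,3ρ)) ≤ D·μ(B(y,ρ)) whenever y ∈ supp μ and B(y,3ρ) ⊆ B̃), and let f: B̃ → ℝ^n be continuous. Assume: (1) there exist C, α > 0 such that for every k ∈ ℕ and every nonzero primitive subgroup Γ ⊆ ℤ^{n+1}, the function x ↦ cov(g_k u_{f(x)} Γ) is (C,α)-good on B̃ with respect to μ; (2) there exist c > 0 and a sequence of natural numbers k_i → ∞ such that for every i and every nonzero primitive subgroup Γ ⊆ ℤ^{n+1}, sup{cov(g_{k_i} u_{f(x)} Γ) : x ∈ B ∩ supp μ} ≥ c^{rank Γ}. Then μ({x ∈ B : f(x) is singular}) = 0. -/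

import Mathlib

open MeasureTheory Filter

/-- A vector `x ∈ ℝ^n` is singular. -/
def IsSingularVec {n : ℕ} (x : Fin n → ℝ) : Prop :=
  ∀ c : ℝ, 0 < c → ∃ Q₀ : ℝ, 0 < Q₀ ∧ ∀ Q : ℝ, Q₀ ≤ Q →
    ∃ q : Fin n → ℤ, q ≠ 0 ∧ ∃ q₀ : ℤ,
      |(∑ i, (q i : ℝ) * x i) + (q₀ : ℝ)| < c / Q ^ n ∧ ∀ i, |(q i : ℝ)| ≤ Q

/-- The support of a measure on a metric space. -/
def measSupport {X : Type*} [MetricSpace X] [MeasurableSpace X] (μ : Measure X) : Set X :=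
  {x | ∀ r : ℝ, 0 < r → 0 < μ (Metric.ball x r)}

/-- A Besicovitch metric space: there is `N` such that any family of balls centered at all
points of a bounded set `A` admits a countable subfamily covering `A` with multiplicity at
most `N`. -/
def IsBesicovitchSpace (X : Type*) [MetricSpace X] : Prop :=
  ∃ N : ℕ, ∀ A : Set X, Bornology.IsBounded A → ∀ r : X → ℝ, (∀ x ∈ A, 0 < r x) →
    ∃ t : Set X, t ⊆ A ∧ t.Countable ∧ (A ⊆ ⋃ x ∈ t, Metric.ball x (r x)) ∧
      ∀ y : X, ({x | x ∈ t ∧ y ∈ Metric.ball x (r x)}).Finite ∧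
        Nat.card {x | x ∈ t ∧ y ∈ Metric.ball x (r x)} ≤ N

/-- `F` is `(C,α)`-good on `U` with respect to `μ`: for every ball `B ⊆ U` centered on
`supp μ` and every `ε > 0`, `μ{x ∈ B : |F x| < ε} ≤ C (ε/‖F‖_{μ,B})^α μ(B)`. -/
def IsCAGoodOn {X : Type*} [MetricSpace X] [MeasurableSpace X] (μ : Measure X)
    (C α : ℝ) (F : X → ℝ) (U : Set X) : Prop :=
  ∀ z ∈ measSupport μ, ∀ ρ : ℝ, 0 < ρ → Metric.ball z ρ ⊆ U → ∀ ε : ℝ, 0 < ε →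
    μ {x ∈ Metric.ball z ρ | |F x| < ε} ≤
      ENNReal.ofReal
        (C * (ε / sSup ((fun x => |F x|) '' (Metric.ball z ρ ∩ measSupport μ))) ^ α) *
      μ (Metric.ball z ρ)

/-- The diagonal matrix `g_k = diag(e^{nk}, e^{-k}, …, e^{-k}) ∈ SL_{n+1}(ℝ)`. -/
noncomputable def gMat (n : ℕ) (k : ℕ) : Matrix (Fin (n+1)) (Fin (n+1)) ℝ :=
  fun i j => if i = j then (if i = 0 then Real.exp ((n : ℝ) * (k : ℝ))
    else Real.exp (-(k : ℝ))) else 0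

/-- The unipotent matrix `u_x ∈ SL_{n+1}(ℝ)` with first row `(1, x₁, …, x_n)`. -/
noncomputable def uMat {n : ℕ} (x : Fin n → ℝ) : Matrix (Fin (n+1)) (Fin (n+1)) ℝ :=
  fun i j => if i = j then 1 else if i = 0 then (Fin.cons 0 x : Fin (n+1) → ℝ) j else 0

/-- `cov(hΔ)` for the subgroup `Δ ⊆ ℤ^m` with ℤ-basis `v₁, …, v_r`. -/
noncomputable def covFam {m r : ℕ} (h : Matrix (Fin m) (Fin m) ℝ)
    (v : Fin r → Fin m → ℤ) : ℝ :=
  ⨆ φ : Fin r → Fin m,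
    |Matrix.det (Matrix.of fun a b : Fin r => h.mulVec (fun i => (v b i : ℝ)) (φ a))|

/-- `v₁, …, v_r` is a ℤ-basis of a primitive subgroup of `ℤ^m` of rank `r`. -/
def IsPrimitiveBasis {m r : ℕ} (v : Fin r → Fin m → ℤ) : Prop :=
  LinearIndependent ℤ v ∧
  ∀ w : Fin m → ℤ,
    ((fun i => (w i : ℝ)) ∈
      Submodule.span ℝ (Set.range fun a => fun i => ((v a i : ℤ) : ℝ))) →
    w ∈ Submodule.span ℤ (Set.range v)

open scoped ENNReal

section Covering

variable {X : Type*} [MetricSpace X] [MeasurableSpace X] {μ : Measure X}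

/-- The complement of the support of a measure on a Besicovitch space is locally null. -/
theorem measure_bounded_diff_measSupport (hX : IsBesicovitchSpace X) {A : Set X}
    (hA : Bornology.IsBounded A) : μ (A \ measSupport μ) = 0 := by
  obtain ⟨N, hN⟩ := hX
  have hex : ∀ x : X, ∃ ρ : ℝ, x ∈ A \ measSupport μ → 0 < ρ ∧ μ (Metric.ball x ρ) = 0 := by
    intro x
    by_cases hx : x ∈ A \ measSupport μ
    · have h := hx.2
      simp only [measSupport, Set.mem_ofPred_eq, not_forall, not_lt, nonpos_iff_eq_zero] at h
      obtain ⟨ρ, h0, h1⟩ := h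
      exact ⟨ρ, fun _ => ⟨h0, h1⟩⟩
    · exact ⟨0, fun h => absurd h hx⟩
  choose ρ hρ using hex
  obtain ⟨t, htA, htc, hcov, -⟩ := hN (A \ measSupport μ) (hA.subset Set.sdiff_subset) ρ
    (fun x hx => (hρ x hx).1)
  refine measure_mono_null hcov ((measure_biUnion_null_iff htc).2 fun x hx => ?_)
  exact (hρ x (htA hx)).2

end Covering

/-- A countable family of sets of multiplicity at most `N` inside `U` has total measure at most
`N * μ U`. -/
theorem tsum_measure_le_of_multiplicity_le {X : Type*} [MeasurableSpace X] {μ : Measure X}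
    {t : Set X} (ht : t.Countable) {s : X → Set X}
    (hs : ∀ x ∈ t, MeasurableSet (s x)) {U : Set X} (hU : ∀ x ∈ t, s x ⊆ U) {N : ℕ}
    (hN : ∀ y : X, ({x | x ∈ t ∧ y ∈ s x}).Finite ∧ Nat.card {x | x ∈ t ∧ y ∈ s x} ≤ N) :
    ∑' x : t, μ (s x) ≤ N * μ U := by
  have : Countable t := ht.to_subtype
  set V : Set X := ⋃ x : t, s x with hV
  have hVm : MeasurableSet V := MeasurableSet.iUnion fun x => hs x x.2
  have hVU : V ⊆ U := Set.iUnion_subset fun x => hU x x.2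
  calc ∑' x : t, μ (s x) = ∑' x : t, ∫⁻ y, (s x).indicator 1 y ∂μ := by
        refine tsum_congr fun x => ?_
        rw [lintegral_indicator_one (hs x x.2)]
    _ = ∫⁻ y, ∑' x : t, (s x).indicator 1 y ∂μ := by
        rw [lintegral_tsum]
        exact fun x => (measurable_one.indicator (hs x x.2)).aemeasurable
    _ ≤ ∫⁻ y, V.indicator (fun _ => (N : ℝ≥0∞)) y ∂μ := by
        refine lintegral_mono fun y => ?_
        obtain ⟨hfin, hcard⟩ := hN y
        by_cases hy : y ∈ V
        · rw [Set.indicator_of_mem hy]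
          have hfin' : {x : t | y ∈ s x}.Finite := by
            have := hfin.preimage (f := ((↑) : t → X)) Subtype.val_injective.injOn
            refine this.subset fun x hx => ⟨x.2, hx⟩
          have hsum : ∑' x : t, (s (x : X)).indicator (1 : X → ℝ≥0∞) y
              = ∑ x ∈ hfin'.toFinset, (s (x : X)).indicator (1 : X → ℝ≥0∞) y := by
            refine tsum_eq_sum fun x hx => ?_
            rw [Set.indicator_of_notMem]
            simpa using hx
          rw [hsum]
          calc ∑ x ∈ hfin'.toFinset, (s (x : X)).indicator (1 : X → ℝ≥0∞) y
              ≤ ∑ x ∈ hfin'.toFinset, 1 := Finset.sum_le_sum fun x _ =>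
                Set.indicator_le_self' (fun _ _ => zero_le) y
            _ = (hfin'.toFinset.card : ℝ≥0∞) := by simp
            _ ≤ N := by
              have h1 : hfin'.toFinset.card ≤ hfin.toFinset.card :=
                Finset.card_le_card_of_injOn (fun x : t => (x : X))
                  (fun x hx => by
                    have hx' : y ∈ s x := by simpa using hx
                    simpa using hx')
                  Subtype.val_injective.injOn
              have h2 : hfin.toFinset.card ≤ N := by
                rw [← Set.ncard_eq_toFinset_card _ hfin]
                exact hcard
              exact_mod_cast h1.trans h2
        · have hzero : ∀ x : t, (s (x : X)).indicator (1 : X → ℝ≥0∞) y = 0 := fun x =>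
            Set.indicator_of_notMem (fun h => hy (Set.mem_iUnion.2 ⟨x, h⟩)) _
          simp [hzero]
    _ = N * μ V := by rw [lintegral_indicator_const hVm]
    _ ≤ N * μ U := by gcongr


section Marked

/-- The elements of `S` comparable to but different from `p`. -/
def comparableTo {P : Type*} [PartialOrder P] (S : Set P) (p : P) : Set P :=
  {q ∈ S | q ≠ p ∧ (q ≤ p ∨ p ≤ q)}

/-- The point `x` is marked by a chain `F` of `S`: on `F` the functions `ψ` lie between `τ η` and
`η`, and on the elements of `S` that could extend the chain they are at least `η`. -/
def IsMarked {X P : Type*} [PartialOrder P] (ψ : P → X → ℝ) (η : P → ℝ) (τ : ℝ) (S : Set P)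
    (x : X) : Prop :=
  ∃ F : Set P, F ⊆ S ∧ F.Finite ∧ IsChain (· ≤ ·) F ∧
    (∀ p ∈ F, τ * η p ≤ ψ p x ∧ ψ p x ≤ η p) ∧
    ∀ p ∈ S, p ∉ F → (∀ q ∈ F, p ≤ q ∨ q ≤ p) → η p ≤ ψ p x

theorem IsMarked.of_comparableTo {X P : Type*} [PartialOrder P] {ψ : P → X → ℝ} {η : P → ℝ}
    {τ : ℝ} {S : Set P} {x : X} {p : P} (hp : p ∈ S) (hlow : τ * η p ≤ ψ p x)
    (hupp : ψ p x ≤ η p) (h : IsMarked ψ η τ (comparableTo S p) x) : IsMarked ψ η τ S x := by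
  obtain ⟨F, hFS, hfin, hchain, hF, hext⟩ := h
  refine ⟨insert p F, Set.insert_subset hp fun q hq => (hFS hq).1, hfin.insert p,
    hchain.insert fun q hq _ => (hFS hq).2.2.symm, ?_, ?_⟩
  · rintro q (rfl | hq)
    · exact ⟨hlow, hupp⟩
    · exact hF q hq
  · intro q hqS hqF hcomp
    rw [Set.mem_insert_iff, not_or] at hqF
    exact hext q ⟨hqS, hqF.1, hcomp p (Set.mem_insert _ _)⟩ hqF.2
      fun q' hq' => hcomp q' (Set.mem_insert_of_mem _ hq')

end Marked

section Nondivergence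

variable {X : Type*} [MetricSpace X] [MeasurableSpace X] {μ : Measure X}

/-- If `F` is good on a set containing a ball centered on the support and reaches `η` on that ball,
then it is rarely smaller than `τ η` there. -/
theorem IsCAGoodOn.measure_lt_le {C α : ℝ} (hC : 0 < C) (hα : 0 < α) {F : X → ℝ} {U : Set X}
    (hF : IsCAGoodOn μ C α F U) {z : X} (hz : z ∈ measSupport μ) {ρ : ℝ} (hρ : 0 < ρ)
    (hU : Metric.ball z ρ ⊆ U) {η τ : ℝ} (hη : 0 < η) (hτ : 0 < τ)
    (hlow : ∃ x ∈ Metric.ball z ρ ∩ measSupport μ, η ≤ F x) :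
    μ {x ∈ Metric.ball z ρ | F x < τ * η ∧ 0 ≤ F x} ≤
      ENNReal.ofReal C * ENNReal.ofReal (τ ^ α) * μ (Metric.ball z ρ) := by
  refine (measure_mono ?_).trans ((hF z hz ρ hρ hU (τ * η) (by positivity)).trans ?_)
  · rintro x ⟨hx, hx1, hx2⟩
    exact ⟨hx, by rwa [abs_of_nonneg hx2]⟩
  rw [← ENNReal.ofReal_mul hC.le]
  have hkey : 0 ≤ τ * η / sSup ((fun x => |F x|) '' (Metric.ball z ρ ∩ measSupport μ)) :=
    div_nonneg (by positivity) (Real.sSup_nonneg (by rintro _ ⟨x, -, rfl⟩; exact abs_nonneg _))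
  gcongr
  set A := (fun x => |F x|) '' (Metric.ball z ρ ∩ measSupport μ) with hA
  by_cases hb : BddAbove A
  · have hS : η ≤ sSup A := by
      obtain ⟨x, hx, hFx⟩ := hlow
      exact hFx.trans ((le_abs_self _).trans (le_csSup hb ⟨x, hx, rfl⟩))
    rw [div_le_iff₀ (hη.trans_le hS)]
    gcongr
  · rw [Real.sSup_of_not_bddAbove hb, div_zero]
    exact hτ.le

/-- The constant of the quantitative nondivergence estimate for chains of length `j`. -/
noncomputable def nondivConst (N : ℕ) (D C : ℝ) : ℕ → ℝ≥0∞
  | 0 => 0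
  | j + 1 => N * (ENNReal.ofReal D * (ENNReal.ofReal D * (nondivConst N D C j + ENNReal.ofReal C)))

theorem nondivConst_ne_top (N : ℕ) (D C : ℝ) (j : ℕ) : nondivConst N D C j ≠ ∞ := by
  induction j with
  | zero => simp [nondivConst]
  | succ j ih =>
    simp only [nondivConst]
    finiteness

/-- Quantitative nondivergence: if every function `ψ p` reaches `η p` on a ball, then most points of
that ball are marked. -/
theorem measure_not_isMarked_le [BorelSpace X] {N : ℕ}
    (hN : ∀ A : Set X, Bornology.IsBounded A → ∀ r : X → ℝ, (∀ x ∈ A, 0 < r x) →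
      ∃ t : Set X, t ⊆ A ∧ t.Countable ∧ (A ⊆ ⋃ x ∈ t, Metric.ball x (r x)) ∧
        ∀ y : X, ({x | x ∈ t ∧ y ∈ Metric.ball x (r x)}).Finite ∧
          Nat.card {x | x ∈ t ∧ y ∈ Metric.ball x (r x)} ≤ N)
    {U : Set X} {D : ℝ}
    (hFed : ∀ y ∈ measSupport μ, ∀ ρ : ℝ, 0 < ρ → Metric.ball y (3 * ρ) ⊆ U →
      μ (Metric.ball y (3 * ρ)) ≤ ENNReal.ofReal D * μ (Metric.ball y ρ))
    {C α : ℝ} (hC : 0 < C) (hα : 0 < α) {τ : ℝ} (hτ : 0 < τ)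
    {P : Type*} [PartialOrder P] [Nonempty P] {ψ : P → X → ℝ} {η : P → ℝ} (hη : ∀ p, 0 < η p)
    (hψ : ∀ p x, 0 ≤ ψ p x) {S₀ : Set P} (hgood : ∀ p ∈ S₀, IsCAGoodOn μ C α (ψ p) U)
    (hcont : ∀ p ∈ S₀, ∀ y ∈ U, ψ p y < η p → ∀ᶠ x in nhds y, ψ p x < η p)
    (j : ℕ) :
    ∀ S ⊆ S₀, (∀ F : Set P, F ⊆ S → F.Finite → IsChain (· ≤ ·) F → F.ncard ≤ j) →
      ∀ (x₀ : X) (s : ℝ), 0 < s → Metric.ball x₀ (3 ^ (j + 1) * s) ⊆ U →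
      (∀ p ∈ S, ∃ x ∈ Metric.ball x₀ s ∩ measSupport μ, η p ≤ ψ p x) →
      μ {x ∈ Metric.ball x₀ s ∩ measSupport μ | ¬ IsMarked ψ η τ S x} ≤
        nondivConst N D C j * ENNReal.ofReal (τ ^ α) * μ (Metric.ball x₀ (3 * s)) := by
  induction j with
  | zero =>
    intro S _ hS x₀ s _ _ _
    have hSe : ∀ p, p ∉ S := fun p hp => by
      simpa using hS {p} (by simpa using hp) (Set.finite_singleton p) IsChain.singleton
    have : {x ∈ Metric.ball x₀ s ∩ measSupport μ | ¬ IsMarked ψ η τ S x} = ∅ := by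
      refine Set.eq_empty_of_forall_notMem fun x hx => hx.2 ?_
      exact ⟨∅, by simp, by simp, by simp, by simp, fun p hp => absurd hp (hSe p)⟩
    rw [this]
    simp
  | succ j ih =>
    intro S hSS₀ hS x₀ s hs hU hlow
    have h3j : (1 : ℝ) ≤ 3 ^ j := one_le_pow₀ (by norm_num)
    have hpow : (3 : ℝ) ^ (j + 1 + 1) = 9 * 3 ^ j := by ring
    -- each bad point `y` comes with an element `p y` of `S` and radii `ρ y < ρ' y`
    have hex : ∀ y ∈ {x ∈ Metric.ball x₀ s ∩ measSupport μ | ¬ IsMarked ψ η τ S x},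
        ∃ (p : P) (ρ ρ' : ℝ),
        p ∈ S ∧ 0 < ρ ∧ ρ < ρ' ∧ ρ' ≤ 3 * ρ ∧ ρ' < 2 * s ∧
        (∀ x ∈ Metric.ball y ρ ∩ measSupport μ, ψ p x ≤ η p) ∧
        ∀ q ∈ S, ∃ x ∈ Metric.ball y ρ' ∩ measSupport μ, η q ≤ ψ q x := by
      rintro y ⟨⟨hyB, hysupp⟩, hym⟩
      set R : Set ℝ := {ρ | 0 < ρ ∧ ∃ p ∈ S, ∀ x ∈ Metric.ball y ρ ∩ measSupport μ, ψ p x < η p}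
        with hR
      have hRub : ∀ ρ ∈ R, ρ ≤ s + dist y x₀ := by
        rintro ρ ⟨-, p, hp, hlt⟩
        by_contra! hcon
        obtain ⟨x, ⟨hxB, hxs⟩, hx⟩ := hlow p hp
        refine absurd (hlt x ⟨?_, hxs⟩) (not_lt.2 hx)
        rw [Metric.mem_ball] at hxB ⊢
        have := dist_triangle_right x y x₀
        linarith
      have hRne : R.Nonempty := by
        by_contra hemp
        refine hym ⟨∅, by simp, by simp, by simp, by simp, fun p hp _ _ => ?_⟩
        by_contra! hlt
        obtain ⟨δ, hδ, hball⟩ := Metric.eventually_nhds_iff_ball.1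
          (hcont p (hSS₀ hp) y (hU (Metric.ball_subset_ball (by nlinarith) hyB)) hlt)
        exact hemp ⟨δ, hδ, p, hp, fun x hx => hball x hx.1⟩
      have hbdd : BddAbove R := ⟨_, hRub⟩
      obtain ⟨ρ₁, hρ₁⟩ := hRne
      set R₀ := sSup R with hR₀
      have hR₀pos : 0 < R₀ := hρ₁.1.trans_le (le_csSup hbdd hρ₁)
      have hR₀lt : R₀ < 2 * s := by
        have h1 : R₀ ≤ s + dist y x₀ := csSup_le ⟨ρ₁, hρ₁⟩ hRub
        have h2 : dist y x₀ < s := hyB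
        linarith
      obtain ⟨ρ, hρR, hρ⟩ := exists_lt_of_lt_csSup ⟨ρ₁, hρ₁⟩ (show R₀ / 2 < R₀ by linarith)
      have hρle : ρ ≤ R₀ := le_csSup hbdd hρR
      obtain ⟨hρ0, p, hp, hlt⟩ := hρR
      obtain ⟨ρ', h1, h2⟩ := exists_between
        (show R₀ < min (2 * s) (3 / 2 * R₀) from lt_min hR₀lt (by linarith))
      rw [lt_min_iff] at h2
      refine ⟨p, ρ, ρ', hp, hρ0, by linarith, by linarith, h2.1,
        fun x hx => (hlt x hx).le, fun q hq => ?_⟩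
      by_contra! hcon
      have : ρ' ∈ R := ⟨by linarith, q, hq, hcon⟩
      exact absurd (le_csSup hbdd this) (not_le.2 h1)
    choose! p ρ ρ' hp using hex
    set E := {x ∈ Metric.ball x₀ s ∩ measSupport μ | ¬ IsMarked ψ η τ S x} with hE
    obtain ⟨t, htE, htc, hcov, hmult⟩ := hN E
      (Metric.isBounded_ball.subset fun x hx => hx.1.1) ρ (fun y hy => (hp y hy).2.1)
    have hlocal : ∀ y ∈ t, μ (E ∩ Metric.ball y (ρ y)) ≤
        (ENNReal.ofReal D * (ENNReal.ofReal D * (nondivConst N D C j + ENNReal.ofReal C))) *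
          ENNReal.ofReal (τ ^ α) * μ (Metric.ball y (ρ y)) := by
      intro y hyt
      have hyE := htE hyt
      obtain ⟨hpS, hρ0, hρρ', hρ'3, hρ's, hupp, hlow'⟩ := hp y hyE
      have hysupp := hyE.1.2
      have hyB : dist y x₀ < s := hyE.1.1
      have hsub : ∀ a : ℝ, a ≤ 2 * 3 ^ (j + 1) * s → Metric.ball y a ⊆ U := by
        intro a ha
        refine (Metric.ball_subset_ball' ?_).trans hU
        rw [pow_succ] at ha
        rw [hpow]
        nlinarith
      have hsub' : ∀ a : ℝ, a ≤ 3 * ρ' y → Metric.ball y a ⊆ U := fun a ha =>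
        hsub a (by rw [pow_succ]; nlinarith)
      have hind := ih (comparableTo S (p y)) (fun q hq => hSS₀ hq.1) (by
        intro F hF hfin hchain
        have hnot : p y ∉ F := fun h => (hF h).2.1 rfl
        have := hS (insert (p y) F) (Set.insert_subset hpS fun q hq => (hF hq).1)
          (hfin.insert _) (hchain.insert fun q hq _ => (hF hq).2.2.symm)
        rw [Set.ncard_insert_of_notMem hnot hfin] at this
        omega) y (ρ' y) (by linarith) (hsub _ (by
          have : (0:ℝ) < 3 ^ (j + 1) := by positivity
          nlinarith)) (fun q hq => hlow' q hq.1)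
      have hsmall := (hgood (p y) (hSS₀ hpS)).measure_lt_le hC hα hysupp (by linarith)
        (hsub' (ρ' y) (by linarith)) (hη (p y)) hτ (hlow' _ hpS)
      have hball : μ (Metric.ball y (3 * ρ' y)) ≤
          ENNReal.ofReal D * (ENNReal.ofReal D * μ (Metric.ball y (ρ y))) := by
        refine (hFed y hysupp (ρ' y) (by linarith) (hsub' _ le_rfl)).trans ?_
        gcongr
        exact (measure_mono (Metric.ball_subset_ball hρ'3)).trans
          (hFed y hysupp (ρ y) hρ0 (hsub' _ (by linarith)))
      calc μ (E ∩ Metric.ball y (ρ y))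
          ≤ μ ({x ∈ Metric.ball y (ρ' y) ∩ measSupport μ |
                ¬ IsMarked ψ η τ (comparableTo S (p y)) x} ∪
              {x ∈ Metric.ball y (ρ' y) | ψ (p y) x < τ * η (p y) ∧ 0 ≤ ψ (p y) x}) := by
            refine measure_mono ?_
            rintro x ⟨hxE, hxB⟩
            have hxB' := Metric.ball_subset_ball hρρ'.le hxB
            by_cases hx : ψ (p y) x < τ * η (p y)
            · exact Or.inr ⟨hxB', hx, hψ _ _⟩
            · refine Or.inl ⟨⟨hxB', hxE.1.2⟩, fun hm => hxE.2 ?_⟩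
              exact hm.of_comparableTo hpS (not_lt.1 hx) (hupp x ⟨hxB, hxE.1.2⟩)
        _ ≤ nondivConst N D C j * ENNReal.ofReal (τ ^ α) * μ (Metric.ball y (3 * ρ' y)) +
            ENNReal.ofReal C * ENNReal.ofReal (τ ^ α) * μ (Metric.ball y (3 * ρ' y)) := by
            refine (measure_union_le _ _).trans (add_le_add hind (hsmall.trans ?_))
            gcongr
            linarith
        _ = (nondivConst N D C j + ENNReal.ofReal C) * ENNReal.ofReal (τ ^ α) *
            μ (Metric.ball y (3 * ρ' y)) := by ring
        _ ≤ (nondivConst N D C j + ENNReal.ofReal C) * ENNReal.ofReal (τ ^ α) *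
            (ENNReal.ofReal D * (ENNReal.ofReal D * μ (Metric.ball y (ρ y)))) := by gcongr
        _ = _ := by ring
    have hcov' : E ⊆ ⋃ y ∈ t, E ∩ Metric.ball y (ρ y) := by
      intro x hx
      obtain ⟨y, hy, hxy⟩ := Set.mem_iUnion₂.1 (hcov hx)
      exact Set.mem_iUnion₂.2 ⟨y, hy, hx, hxy⟩
    have : Countable t := htc.to_subtype
    calc μ E ≤ ∑' y : t, μ (E ∩ Metric.ball y (ρ y)) :=
          (measure_mono hcov').trans (measure_biUnion_le μ htc _)
      _ ≤ ∑' y : t, (ENNReal.ofReal D *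
          (ENNReal.ofReal D * (nondivConst N D C j + ENNReal.ofReal C))) *
          ENNReal.ofReal (τ ^ α) * μ (Metric.ball y (ρ y)) :=
          ENNReal.tsum_le_tsum fun y => hlocal y y.2
      _ = (ENNReal.ofReal D * (ENNReal.ofReal D * (nondivConst N D C j + ENNReal.ofReal C))) *
          ENNReal.ofReal (τ ^ α) * ∑' y : t, μ (Metric.ball y (ρ y)) := ENNReal.tsum_mul_left
      _ ≤ (ENNReal.ofReal D * (ENNReal.ofReal D * (nondivConst N D C j + ENNReal.ofReal C))) *
          ENNReal.ofReal (τ ^ α) * (N * μ (Metric.ball x₀ (3 * s))) := by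
          gcongr
          refine tsum_measure_le_of_multiplicity_le htc
            (fun y _ => Metric.isOpen_ball.measurableSet) (fun y hy => ?_) hmult
          obtain ⟨-, -, h1, -, h2, -⟩ := hp y (htE hy)
          have hyB : dist y x₀ < s := (htE hy).1.1
          exact Metric.ball_subset_ball' (by linarith)
      _ = _ := by simp only [nondivConst]; ring

/-- A regular measure on a metric space is locally finite. -/
theorem exists_measure_ball_lt_top [BorelSpace X] [μ.Regular] (y : X) :
    ∃ ρ : ℝ, 0 < ρ ∧ μ (Metric.ball y ρ) < ∞ := by
  by_contra! hcon
  have hK : ∀ m : ℕ, ∃ K ⊆ Metric.ball y (1 / ((m : ℝ) + 1)), IsCompact K ∧ (m : ℝ≥0∞) < μ K := by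
    intro m
    refine Metric.isOpen_ball.exists_lt_isCompact (lt_of_lt_of_le ?_ (hcon _ (by positivity)))
    exact ENNReal.natCast_lt_top m
  choose K hKsub hKc hKμ using hK
  have hcomp : IsCompact (insert y (⋃ m, K m)) := by
    refine isCompact_of_finite_subcover fun {ι} V hV hcov => ?_
    obtain ⟨i₀, hi₀⟩ := Set.mem_iUnion.1 (hcov (Set.mem_insert y _))
    obtain ⟨δ, hδ, hball⟩ := Metric.isOpen_iff.1 (hV i₀) y hi₀
    obtain ⟨M, hM⟩ := exists_nat_one_div_lt hδ
    obtain ⟨t, ht⟩ := ((Set.finite_Iio M).isCompact_biUnion fun m _ => hKc m).elim_finite_subcover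
      V hV ((Set.iUnion₂_subset fun m _ => (Set.subset_iUnion K m).trans
        (Set.subset_insert _ _)).trans hcov)
    classical
    refine ⟨insert i₀ t, ?_⟩
    rw [Finset.set_biUnion_insert]
    refine Set.insert_subset (Or.inl hi₀) (Set.iUnion_subset fun m => ?_)
    rcases lt_or_ge m M with hm | hm
    · exact ((Set.subset_biUnion_of_mem (u := K) (Set.mem_Iio.2 hm)).trans ht).trans
        Set.subset_union_right
    · refine ((hKsub m).trans ((Metric.ball_subset_ball ?_).trans hball)).trans
        Set.subset_union_left
      refine le_trans ?_ hM.le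
      gcongr
  have hfin := hcomp.measure_lt_top (μ := μ)
  obtain ⟨m, hm⟩ := ENNReal.exists_nat_gt hfin.ne
  refine absurd (measure_mono ?_) (not_le.2 (hm.trans (hKμ m)))
  exact (Set.subset_iUnion K m).trans (Set.subset_insert _ _)

/-- Under the Federer condition, balls centered on the support have finite measure. -/
theorem measure_ball_lt_top_of_federer [BorelSpace X] [μ.Regular] {U : Set X} {D : ℝ}
    (hFed : ∀ y ∈ measSupport μ, ∀ ρ : ℝ, 0 < ρ → Metric.ball y (3 * ρ) ⊆ U →
      μ (Metric.ball y (3 * ρ)) ≤ ENNReal.ofReal D * μ (Metric.ball y ρ))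
    {y : X} (hy : y ∈ measSupport μ) {R : ℝ} (hR : Metric.ball y R ⊆ U) :
    μ (Metric.ball y R) < ∞ := by
  obtain ⟨ρ, hρ, hfin⟩ := exists_measure_ball_lt_top (μ := μ) y
  have hj : ∀ j : ℕ, μ (Metric.ball y (min R (3 ^ j * ρ))) < ∞ := by
    intro j
    induction j with
    | zero => exact (measure_mono (Metric.ball_subset_ball (by simp))).trans_lt hfin
    | succ j ih =>
      rcases le_or_gt R 0 with h0 | h0
      · rw [Metric.ball_eq_empty.2 ((min_le_left _ _).trans h0)]
        simp
      set a := min R (3 ^ (j + 1) * ρ) with ha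
      have ha0 : 0 < a := lt_min h0 (by positivity)
      have h3 : a = 3 * (a / 3) := by ring
      have hsub : Metric.ball y (3 * (a / 3)) ⊆ U := by
        rw [← h3]
        exact (Metric.ball_subset_ball (min_le_left _ _)).trans hR
      rw [h3]
      refine (hFed y hy (a / 3) (by positivity) hsub).trans_lt
        (ENNReal.mul_lt_top ENNReal.ofReal_lt_top ((measure_mono ?_).trans_lt ih))
      refine Metric.ball_subset_ball (le_min ?_ ?_)
      · have : a ≤ R := min_le_left _ _
        linarith
      · have : a ≤ 3 ^ (j + 1) * ρ := min_le_right _ _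
        rw [pow_succ] at this
        linarith
  obtain ⟨j, hj'⟩ := pow_unbounded_of_one_lt (R / ρ) (show (1 : ℝ) < 3 by norm_num)
  rw [div_lt_iff₀ hρ] at hj'
  have := hj j
  rwa [min_eq_left hj'.le] at this

end Nondivergence

section Lattice

/-- The coordinatewise inclusion `ℤ^m → ℚ^m`. -/
def intToRat (m : ℕ) : (Fin m → ℤ) →ₗ[ℤ] (Fin m → ℚ) :=
  LinearMap.pi fun i => (Algebra.linearMap ℤ ℚ).comp (LinearMap.proj i)

@[simp]
theorem intToRat_apply {m : ℕ} (w : Fin m → ℤ) (i : Fin m) : intToRat m w i = w i := rfl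

theorem intToRat_injective (m : ℕ) : Function.Injective (intToRat m) := by
  intro v w h
  ext i
  have := congrFun h i
  simpa using this

/-- The integer points of a rational subspace of dimension `r` have a `ℤ`-basis of size `r`. -/
theorem exists_intBasis {m : ℕ} (W : Submodule ℚ (Fin m → ℚ)) :
    ∃ v : Fin (Module.finrank ℚ W) → Fin m → ℤ, LinearIndependent ℤ v ∧
      (∀ a, intToRat m (v a) ∈ W) ∧
      ∀ w, intToRat m w ∈ W → w ∈ Submodule.span ℤ (Set.range v) := by
  set Γ : Submodule ℤ (Fin m → ℤ) := (W.restrictScalars ℤ).comap (intToRat m) with hΓ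
  set b := Module.finBasis ℤ Γ
  set v : Fin (Module.finrank ℤ Γ) → Fin m → ℤ := fun a => (b a : Fin m → ℤ) with hv
  have hind : LinearIndependent ℤ v :=
    b.linearIndependent.map' Γ.subtype (Submodule.ker_subtype _)
  have hmem : ∀ a, intToRat m (v a) ∈ W := fun a => (b a).2
  have hspan : ∀ w, intToRat m w ∈ W → w ∈ Submodule.span ℤ (Set.range v) := by
    intro w hw
    have h1 : (⟨w, hw⟩ : Γ) ∈ Submodule.span ℤ (Set.range b) := by simp [b.span_eq]
    have h2 := Submodule.mem_map_of_mem (f := Γ.subtype) h1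
    rw [Submodule.map_span, ← Set.range_comp] at h2
    exact h2
  have hindQ : LinearIndependent ℚ (fun a => intToRat m (v a)) := by
    rw [← LinearIndependent.iff_fractionRing ℤ ℚ]
    exact hind.map' (intToRat m) (LinearMap.ker_eq_bot.2 (intToRat_injective m))
  have hW : Submodule.span ℚ (Set.range fun a => intToRat m (v a)) = W := by
    refine le_antisymm (Submodule.span_le.2 ?_) fun x hx => ?_
    · rintro _ ⟨a, rfl⟩
      exact hmem a
    · obtain ⟨d, hd⟩ := IsLocalization.exist_integer_multiples_of_finite (nonZeroDivisors ℤ) x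
      choose w hw using hd
      have hd0 : ((d : ℤ) : ℚ) ≠ 0 := by exact_mod_cast nonZeroDivisors.coe_ne_zero d
      have hwx : intToRat m w = ((d : ℤ) : ℚ) • x := by
        ext i
        have := hw i
        simpa [Algebra.smul_def, Submonoid.smul_def] using this
      have hwΓ := hspan w (by rw [hwx]; exact W.smul_mem _ hx)
      have h2 := Submodule.mem_map_of_mem (f := intToRat m) hwΓ
      rw [Submodule.map_span, ← Set.range_comp] at h2
      have h3 := Submodule.span_le_restrictScalars ℤ ℚ _ h2
      rw [hwx] at h3
      exact (Submodule.smul_mem_iff _ hd0).1 h3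
  have hcard : Module.finrank ℚ W = Module.finrank ℤ Γ := by
    have := finrank_span_eq_card hindQ
    rw [hW] at this
    simpa using this
  refine ⟨v ∘ Fin.cast hcard, hind.comp _ (Fin.cast_injective hcard), fun a => hmem _, ?_⟩
  intro w hw
  have hrange : Set.range (v ∘ Fin.cast hcard) = Set.range v :=
    (finCongr hcard).surjective.range_comp v
  rw [hrange]
  exact hspan w hw

/-- A `ℤ`-basis of the integer points of a rational subspace. -/
noncomputable def intBasis {m : ℕ} (W : Submodule ℚ (Fin m → ℚ)) :
    Fin (Module.finrank ℚ W) → Fin m → ℤ :=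
  (exists_intBasis W).choose

theorem linearIndependent_intBasis {m : ℕ} (W : Submodule ℚ (Fin m → ℚ)) :
    LinearIndependent ℤ (intBasis W) := (exists_intBasis W).choose_spec.1

theorem intBasis_mem {m : ℕ} (W : Submodule ℚ (Fin m → ℚ)) (a : Fin (Module.finrank ℚ W)) :
    intToRat m (intBasis W a) ∈ W := (exists_intBasis W).choose_spec.2.1 a

theorem mem_span_intBasis {m : ℕ} {W : Submodule ℚ (Fin m → ℚ)} {w : Fin m → ℤ}
    (hw : intToRat m w ∈ W) : w ∈ Submodule.span ℤ (Set.range (intBasis W)) :=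
  (exists_intBasis W).choose_spec.2.2 w hw

theorem isPrimitiveBasis_intBasis {m : ℕ} (W : Submodule ℚ (Fin m → ℚ)) :
    IsPrimitiveBasis (intBasis W) := by
  refine ⟨linearIndependent_intBasis W, fun w hw => mem_span_intBasis ?_⟩
  by_contra hnot
  obtain ⟨φ, hφw, hφW⟩ := Submodule.exists_le_ker_of_notMem hnot
  have hφ : ∀ x : Fin m → ℤ,
      ((φ (intToRat m x) : ℚ) : ℝ) = ∑ i, (x i : ℝ) * (φ (Pi.single i 1) : ℚ) := by
    intro x
    rw [LinearMap.pi_apply_eq_sum_univ φ (intToRat m x)]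
    push_cast [smul_eq_mul, intToRat_apply]
    refine Finset.sum_congr rfl fun i _ => ?_
    congr 4
    ext j
    simp [Pi.single_apply, eq_comm]
  let φR : (Fin m → ℝ) →ₗ[ℝ] ℝ :=
    ∑ i, ((φ (Pi.single i 1) : ℚ) : ℝ) • LinearMap.proj i
  have hφR : ∀ x : Fin m → ℤ, φR (fun i => (x i : ℝ)) = (φ (intToRat m x) : ℚ) := by
    intro x
    rw [hφ]
    simp [φR, mul_comm]
  have hle : Submodule.span ℝ (Set.range fun a => fun i => ((intBasis W a i : ℤ) : ℝ)) ≤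
      LinearMap.ker φR := by
    refine Submodule.span_le.2 ?_
    rintro _ ⟨a, rfl⟩
    have h0 : φ (intToRat m (intBasis W a)) = 0 := hφW (intBasis_mem W a)
    change φR _ = 0
    rw [hφR, h0, Rat.cast_zero]
  have h0 : φR (fun i => (w i : ℝ)) = 0 := hle hw
  rw [hφR] at h0
  exact hφw (by exact_mod_cast h0)

end Lattice

section Covolume

theorem abs_det_le_covFam {m r : ℕ} (h : Matrix (Fin m) (Fin m) ℝ) (v : Fin r → Fin m → ℤ)
    (φ : Fin r → Fin m) :
    |Matrix.det (Matrix.of fun a b : Fin r => h.mulVec (fun i => (v b i : ℝ)) (φ a))| ≤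
      covFam h v :=
  le_ciSup (f := fun φ : Fin r → Fin m =>
    |Matrix.det (Matrix.of fun a b : Fin r => h.mulVec (fun i => (v b i : ℝ)) (φ a))|)
    (Set.finite_range _).bddAbove φ

theorem covFam_nonneg {m r : ℕ} (h : Matrix (Fin m) (Fin m) ℝ) (v : Fin r → Fin m → ℤ) :
    0 ≤ covFam h v :=
  Real.iSup_nonneg fun _ => abs_nonneg _

theorem covFam_le_one_of_rank_zero {m r : ℕ} (hr : r = 0) (h : Matrix (Fin m) (Fin m) ℝ)
    (v : Fin r → Fin m → ℤ) : covFam h v ≤ 1 := by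
  subst hr
  exact Real.iSup_le (fun φ => by simp) zero_le_one

/-- A square integer matrix expressing a linearly independent family through another family has
determinant of absolute value at least one. -/
theorem one_le_abs_det_of_linearIndependent {m r : ℕ} {u w : Fin r → Fin m → ℤ}
    (hu : LinearIndependent ℤ u) {A : Matrix (Fin r) (Fin r) ℤ}
    (hA : ∀ b, u b = ∑ c, A c b • w c) : 1 ≤ |A.det| := by
  refine Int.one_le_abs fun h0 => ?_
  obtain ⟨x, hx0, hx⟩ := Matrix.exists_mulVec_eq_zero_iff.2 h0
  refine hx0 (funext (Fintype.linearIndependent_iff.1 hu x ?_))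
  simp_rw [hA, Finset.smul_sum, smul_smul]
  rw [Finset.sum_comm]
  refine Finset.sum_eq_zero fun c _ => ?_
  rw [← Finset.sum_smul]
  have : ∑ b, x b * A c b = A.mulVec x c := by
    simp [Matrix.mulVec, dotProduct, mul_comm]
  rw [this, hx]
  simp

/-- Adding one vector to a subgroup multiplies its covolume by at most a multiple of the size of
that vector, and passing to a larger subgroup of the same rank does not increase the covolume. -/
theorem covFam_le_of_cons {m r r' : ℕ} (hr : r' = r + 1) (h : Matrix (Fin m) (Fin m) ℝ)
    (v : Fin r → Fin m → ℤ) (w : Fin r' → Fin m → ℤ) (q : Fin m → ℤ)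
    (hind : LinearIndependent ℤ (Fin.cons q v : Fin (r + 1) → Fin m → ℤ))
    (hq : q ∈ Submodule.span ℤ (Set.range w))
    (hv : ∀ a, v a ∈ Submodule.span ℤ (Set.range w))
    {M : ℝ} (hM : ∀ i, |h.mulVec (fun i => (q i : ℝ)) i| ≤ M) (hM0 : 0 ≤ M) :
    covFam h w ≤ (r + 1) * M * covFam h v := by
  subst hr
  have hcov := covFam_nonneg h v
  refine Real.iSup_le (fun φ => ?_) (by positivity)
  set u : Fin (r + 1) → Fin m → ℤ := Fin.cons q v with hu
  have huw : ∀ b, ∃ c : Fin (r + 1) → ℤ, ∑ i, c i • w i = u b := by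
    intro b
    rw [← Submodule.mem_span_range_iff_exists_fun]
    refine Fin.cases ?_ (fun a => ?_) b
    · simpa [hu] using hq
    · simpa [hu] using hv a
  choose A hA using huw
  have hdet := one_le_abs_det_of_linearIndependent (A := Matrix.of fun c b => A b c) hind
    (fun b => (hA b).symm)
  set Mw := Matrix.of fun a b : Fin (r + 1) => h.mulVec (fun i => (w b i : ℝ)) (φ a) with hMw
  set Mu := Matrix.of fun a b : Fin (r + 1) => h.mulVec (fun i => (u b i : ℝ)) (φ a) with hMu
  have hmul : Mu = Mw * (Matrix.of fun c b => A b c).map (Int.castRingHom ℝ) := by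
    ext a b
    have hub : (fun i => (u b i : ℝ)) = ∑ c, (A b c : ℝ) • fun i => (w c i : ℝ) := by
      ext i
      rw [← hA b]
      simp
    simp only [hMu, hMw, Matrix.of_apply, Matrix.mul_apply, Matrix.map_apply, hub,
      Matrix.mulVec_sum, Matrix.mulVec_smul, Finset.sum_apply, Pi.smul_apply, smul_eq_mul,
      eq_intCast]
    exact Finset.sum_congr rfl fun c _ => mul_comm _ _
  have hdetR : (1 : ℝ) ≤ |((Matrix.of fun c b => A b c).map (Int.castRingHom ℝ)).det| := by
    have h1 := (Int.castRingHom ℝ).map_det (Matrix.of fun c b => A b c)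
    rw [RingHom.mapMatrix_apply] at h1
    rw [← h1, eq_intCast]
    exact_mod_cast hdet
  calc |Mw.det| ≤ |Mu.det| := by
        rw [hmul, Matrix.det_mul, abs_mul]
        exact le_mul_of_one_le_right (abs_nonneg _) hdetR
    _ ≤ ∑ _i : Fin (r + 1), M * covFam h v := by
        rw [Matrix.det_succ_column_zero]
        refine (Finset.abs_sum_le_sum_abs _ _).trans (Finset.sum_le_sum fun i _ => ?_)
        rw [abs_mul, abs_mul, abs_pow, abs_neg, abs_one, one_pow, one_mul]
        refine mul_le_mul (hM (φ i)) ?_ (abs_nonneg _) hM0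
        exact abs_det_le_covFam h v (φ ∘ i.succAbove)
    _ = (r + 1) * M * covFam h v := by simp; ring

theorem one_le_covFam_of_rank_eq {m r : ℕ} (hr : r = m) {h : Matrix (Fin m) (Fin m) ℝ}
    (hdet : h.det = 1) {v : Fin r → Fin m → ℤ} (hv : LinearIndependent ℤ v) :
    1 ≤ covFam h v := by
  subst hr
  have h1 := one_le_abs_det_of_linearIndependent (A := Matrix.of fun c b => v b c)
    (w := fun c => Pi.single c 1) hv (fun b => by
      ext i
      simp [Finset.sum_apply, Pi.single_apply])
  refine le_trans ?_ (abs_det_le_covFam h v id)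
  have hmul : (Matrix.of fun a b : Fin r => h.mulVec (fun i => (v b i : ℝ)) (id a)) =
      h * (Matrix.of fun c b => v b c).map (Int.castRingHom ℝ) := by
    ext a b
    simp [Matrix.mul_apply, Matrix.mulVec, dotProduct]
  have h2 := (Int.castRingHom ℝ).map_det (Matrix.of fun c b => v b c)
  rw [RingHom.mapMatrix_apply] at h2
  rw [hmul, Matrix.det_mul, hdet, one_mul, ← h2, eq_intCast]
  exact_mod_cast h1

/-- The covolume of a one-vector extension of a rational subspace. -/
theorem covFam_intBasis_sup_span_le {m : ℕ} (h : Matrix (Fin m) (Fin m) ℝ)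
    (W : Submodule ℚ (Fin m → ℚ)) {q : Fin m → ℤ} (hq : intToRat m q ∉ W) {M : ℝ}
    (hM : ∀ i, |h.mulVec (fun i => (q i : ℝ)) i| ≤ M) (hM0 : 0 ≤ M) :
    covFam h (intBasis (W ⊔ Submodule.span ℚ {intToRat m q})) ≤
      (Module.finrank ℚ W + 1) * M * covFam h (intBasis W) := by
  refine covFam_le_of_cons (Submodule.finrank_sup_span_singleton hq) h _ _ q ?_ ?_ ?_ hM hM0
  · have hinj := intToRat_injective m
    rw [← LinearMap.linearIndependent_iff (intToRat m) (LinearMap.ker_eq_bot.2 hinj),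
      LinearIndependent.iff_fractionRing ℤ ℚ]
    have hcons : (intToRat m ∘ (Fin.cons q (intBasis W) : Fin (_ + 1) → Fin m → ℤ)) =
        Fin.cons (intToRat m q) (intToRat m ∘ intBasis W) := by
      funext b
      refine Fin.cases ?_ (fun a => ?_) b <;> simp
    rw [hcons, linearIndependent_finCons, ← LinearIndependent.iff_fractionRing ℤ ℚ,
      LinearMap.linearIndependent_iff (intToRat m) (LinearMap.ker_eq_bot.2 hinj)]
    refine ⟨linearIndependent_intBasis W, fun hmem => hq (Submodule.span_le.2 ?_ hmem)⟩
    rintro _ ⟨a, rfl⟩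
    exact intBasis_mem W a
  · exact mem_span_intBasis (Submodule.mem_sup_right (Submodule.mem_span_singleton_self _))
  · exact fun a => mem_span_intBasis (Submodule.mem_sup_left (intBasis_mem W a))

/-- At a marked point the lattice has no short nonzero vector. -/
theorem IsMarked.exists_le_abs_mulVec {X : Type*} {m : ℕ} {h : X → Matrix (Fin m) (Fin m) ℝ}
    {x : X} {ρ τ : ℝ} (hdet : (h x).det = 1) (hρ : 0 < ρ) (hρ1 : ρ ≤ 1) (hτ : 0 < τ) (hτ1 : τ ≤ 1)
    (hx : IsMarked (fun (W : Submodule ℚ (Fin m → ℚ)) y => covFam (h y) (intBasis W))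
      (fun W => ρ ^ Module.finrank ℚ W) τ {W | W ≠ ⊥ ∧ W ≠ ⊤} x)
    {q : Fin m → ℤ} (hq : q ≠ 0) :
    ∃ i, τ * ρ / (m + 1) ≤ |(h x).mulVec (fun i => (q i : ℝ)) i| := by
  by_contra! hcon
  obtain ⟨F, hFS, hfin, hchain, hF, hext⟩ := hx
  set v := intToRat m q with hv
  have hv0 : v ≠ 0 := fun h0 => hq (intToRat_injective m (by rw [← hv, h0, map_zero]))
  -- the largest element of the chain, extended by `⊥`, that does not contain `v`
  obtain ⟨W, hWv, hWcov, hWle, hleW⟩ : ∃ W : Submodule ℚ (Fin m → ℚ), v ∉ W ∧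
      covFam (h x) (intBasis W) ≤ ρ ^ Module.finrank ℚ W ∧
      (∀ V ∈ F, v ∈ V → W ≤ V) ∧ ∀ V ∈ F, v ∉ V → V ≤ W := by
    by_cases hne : {V ∈ F | v ∉ V}.Nonempty
    · obtain ⟨W, hW⟩ := (hfin.subset (Set.sep_subset F fun V => v ∉ V)).exists_maximal hne
      refine ⟨W, hW.1.2, (hF W hW.1.1).2, fun V hV hvV => ?_, fun V hV hvV => ?_⟩
      · rcases hchain.total hW.1.1 hV with h1 | h1
        · exact h1
        · exact absurd (h1 hvV) hW.1.2
      · rcases hchain.total hW.1.1 hV with h1 | h1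
        · exact hW.2 ⟨hV, hvV⟩ h1
        · exact h1
    · refine ⟨⊥, by simpa using hv0, ?_, fun V _ _ => bot_le, fun V hV hvV =>
        absurd ⟨V, hV, hvV⟩ hne⟩
      simpa using covFam_le_one_of_rank_zero (finrank_bot ℚ (Fin m → ℚ)) (h x) (intBasis ⊥)
  set V := W ⊔ Submodule.span ℚ {v} with hV
  have hvV : v ∈ V := Submodule.mem_sup_right (Submodule.mem_span_singleton_self _)
  have hrank : Module.finrank ℚ V = Module.finrank ℚ W + 1 :=
    Submodule.finrank_sup_span_singleton hWv
  have hrank_le : Module.finrank ℚ W + 1 ≤ m := by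
    rw [← hrank]
    simpa using Submodule.finrank_le V
  have hlow : τ * ρ ^ Module.finrank ℚ V ≤ covFam (h x) (intBasis V) := by
    have hpow : 0 < ρ ^ Module.finrank ℚ V := by positivity
    by_cases htop : V = ⊤
    · have h1 : 1 ≤ covFam (h x) (intBasis V) :=
        one_le_covFam_of_rank_eq (by rw [htop]; simp) hdet (linearIndependent_intBasis V)
      have h2 : ρ ^ Module.finrank ℚ V ≤ 1 := pow_le_one₀ hρ.le hρ1
      nlinarith
    by_cases hVF : V ∈ F
    · exact (hF V hVF).1
    · refine le_trans (mul_le_of_le_one_left hpow.le hτ1) (hext V ⟨?_, htop⟩ hVF ?_)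
      · rintro h0
        rw [h0] at hvV
        exact hv0 (by simpa using hvV)
      · intro V' hV'
        by_cases hvV' : v ∈ V'
        · exact Or.inl (sup_le (hWle V' hV' hvV')
            ((Submodule.span_singleton_le_iff_mem _ _).2 hvV'))
        · exact Or.inr ((hleW V' hV' hvV').trans le_sup_left)
  have hM0 : 0 ≤ τ * ρ / (m + 1) := by positivity
  have hupp := covFam_intBasis_sup_span_le (h x) W hWv (fun i => (hcon i).le) hM0
  have hpowV : ρ ^ Module.finrank ℚ V = ρ ^ Module.finrank ℚ W * ρ := by
    rw [hrank, pow_succ]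
  have hr : ((Module.finrank ℚ W : ℝ) + 1) ≤ m := by exact_mod_cast hrank_le
  have hpow : 0 < ρ ^ Module.finrank ℚ W := by positivity
  have hstrict : ((Module.finrank ℚ W : ℝ) + 1) * (τ * ρ / (m + 1)) < τ * ρ := by
    rw [mul_div_assoc', div_lt_iff₀ (by positivity)]
    nlinarith [mul_pos hτ hρ]
  have : covFam (h x) (intBasis V) ≤
      ((Module.finrank ℚ W : ℝ) + 1) * (τ * ρ / (m + 1)) * ρ ^ Module.finrank ℚ W :=
    hupp.trans (by gcongr)
  have := mul_lt_mul_of_pos_right hstrict hpow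
  rw [hpowV] at hlow
  linarith

end Covolume

section Flow

theorem det_gMat (n k : ℕ) : (gMat n k).det = 1 := by
  have h : gMat n k = Matrix.diagonal fun i : Fin (n + 1) =>
      if i = 0 then Real.exp ((n : ℝ) * (k : ℝ)) else Real.exp (-(k : ℝ)) := by
    ext i j
    simp [gMat, Matrix.diagonal_apply]
  rw [h, Matrix.det_diagonal, Fin.prod_univ_succ]
  simp [← Real.exp_nat_mul, ← Real.exp_add]

theorem det_uMat {n : ℕ} (x : Fin n → ℝ) : (uMat x).det = 1 := by
  rw [Matrix.det_of_isUpperTriangular]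
  · simp [uMat]
  · intro i j hij
    have hij' : j < i := hij
    have h1 : i ≠ j := hij'.ne'
    have h2 : i ≠ 0 := (lt_of_le_of_lt (Fin.zero_le j) hij').ne'
    simp [uMat, h1, h2]

theorem det_gMat_mul_uMat (n k : ℕ) (x : Fin n → ℝ) : (gMat n k * uMat x).det = 1 := by
  rw [Matrix.det_mul, det_gMat, det_uMat, one_mul]

theorem continuous_uMat (n : ℕ) : Continuous (uMat : (Fin n → ℝ) → _) := by
  refine continuous_matrix fun i j => ?_
  unfold uMat
  split_ifs
  · exact continuous_const
  · refine Fin.cases ?_ (fun l => ?_) j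
    · simpa using continuous_const
    · simpa using continuous_apply l
  · exact continuous_const

/-- Upper semicontinuity of the covolume along the unipotent flow. -/
theorem eventually_covFam_lt {n r : ℕ} {g : Matrix (Fin (n + 1)) (Fin (n + 1)) ℝ}
    {v : Fin r → Fin (n + 1) → ℤ} {η : ℝ} {x : Fin n → ℝ} (hx : covFam (g * uMat x) v < η) :
    ∀ᶠ z in nhds x, covFam (g * uMat z) v < η := by
  have hall : ∀ᶠ z in nhds x, ∀ φ : Fin r → Fin (n + 1),
      |Matrix.det (Matrix.of fun a b : Fin r =>
        (g * uMat z).mulVec (fun i => (v b i : ℝ)) (φ a))| < η := by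
    refine eventually_all.2 fun φ => ?_
    have hcont : Continuous fun z : Fin n → ℝ => |Matrix.det (Matrix.of fun a b : Fin r =>
        (g * uMat z).mulVec (fun i => (v b i : ℝ)) (φ a))| := by
      refine (Continuous.matrix_det (continuous_matrix fun a b => ?_)).abs
      have h1 : Continuous fun z : Fin n → ℝ => (g * uMat z).mulVec (fun i => (v b i : ℝ)) :=
        (continuous_const.matrix_mul (continuous_uMat n)).matrix_mulVec continuous_const
      exact (continuous_apply (φ a)).comp h1
    exact hcont.continuousAt.eventually
      (gt_mem_nhds ((abs_det_le_covFam (g * uMat x) v φ).trans_lt hx))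
  filter_upwards [hall] with z hz
  obtain ⟨φ, hφ⟩ := exists_eq_ciSup_of_finite (f := fun φ : Fin r → Fin (n + 1) =>
    |Matrix.det (Matrix.of fun a b : Fin r =>
      (g * uMat z).mulVec (fun i => (v b i : ℝ)) (φ a))|)
  exact hφ.symm.trans_lt (hz φ)

/-- Chains of nonzero proper subspaces have length smaller than the dimension. -/
theorem ncard_le_of_isChain {n : ℕ} {F : Set (Submodule ℚ (Fin (n + 1) → ℚ))}
    (hF : F ⊆ {W | W ≠ ⊥ ∧ W ≠ ⊤}) (hchain : IsChain (· ≤ ·) F) : F.ncard ≤ n := by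
  have hmaps : ∀ W ∈ F, Module.finrank ℚ W ∈ Set.Icc 1 n := by
    intro W hW
    refine ⟨Nat.one_le_iff_ne_zero.2 fun h0 => (hF hW).1 (Submodule.finrank_eq_zero.1 h0), ?_⟩
    have := Submodule.finrank_lt (hF hW).2
    simp at this
    omega
  have hinj : Set.InjOn (fun W : Submodule ℚ (Fin (n + 1) → ℚ) => Module.finrank ℚ W) F := by
    intro V hV W hW hVW
    rcases hchain.total hV hW with h | h
    · exact Submodule.eq_of_le_of_finrank_eq h hVW
    · exact (Submodule.eq_of_le_of_finrank_eq h hVW.symm).symm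
  refine (Set.ncard_le_ncard_of_injOn _ hmaps hinj (Set.finite_Icc 1 n)).trans ?_
  simp [Set.ncard_eq_toFinset_card']

/-- If `x` is singular, then `g_k u_x ℤ^{n+1}` contains arbitrarily short nonzero vectors for all
large `k`. -/
theorem IsSingularVec.eventually_exists_short {n : ℕ} {x : Fin n → ℝ} (hx : IsSingularVec x)
    {ε : ℝ} (hε : 0 < ε) :
    ∀ᶠ k : ℕ in atTop, ∃ q : Fin (n + 1) → ℤ, q ≠ 0 ∧
      ∀ i, |(gMat n k * uMat x).mulVec (fun i => (q i : ℝ)) i| < ε := by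
  obtain ⟨Q₀, -, hQ⟩ := hx (ε * (ε / 2) ^ n) (by positivity)
  have hlim : Tendsto (fun k : ℕ => ε / 2 * Real.exp (k : ℝ)) atTop atTop :=
    (Real.tendsto_exp_atTop.comp tendsto_natCast_atTop_atTop).const_mul_atTop (by positivity)
  filter_upwards [hlim.eventually_ge_atTop Q₀] with k hk
  obtain ⟨q, hq0, q₀, hlt, hle⟩ := hQ _ hk
  have hqne : (Fin.cons q₀ q : Fin (n + 1) → ℤ) ≠ 0 := fun h0 => hq0 <| by
    ext i
    simpa using congrFun h0 i.succ
  refine ⟨Fin.cons q₀ q, hqne, fun i => ?_⟩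
  rw [← Matrix.mulVec_mulVec]
  have hg : ∀ (w : Fin (n + 1) → ℝ) (i : Fin (n + 1)), (gMat n k).mulVec w i =
      (if i = 0 then Real.exp ((n : ℝ) * (k : ℝ)) else Real.exp (-(k : ℝ))) * w i := by
    intro w i
    simp [Matrix.mulVec, dotProduct, gMat]
  rw [hg, abs_mul]
  refine Fin.cases ?_ (fun l => ?_) i
  · have hu : (uMat x).mulVec (fun i => ((Fin.cons q₀ q : Fin (n + 1) → ℤ) i : ℝ)) 0 =
        (∑ i, (q i : ℝ) * x i) + (q₀ : ℝ) := by
      simp [Matrix.mulVec, dotProduct, uMat, Fin.sum_univ_succ, mul_comm, add_comm,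
        (Fin.succ_ne_zero _).symm]
    rw [hu, if_pos rfl, abs_of_pos (Real.exp_pos _)]
    have hbd : ε * (ε / 2) ^ n / (ε / 2 * Real.exp (k : ℝ)) ^ n =
        ε / Real.exp ((n : ℝ) * (k : ℝ)) := by
      rw [mul_pow, ← Real.exp_nat_mul]
      field_simp
    rw [hbd, lt_div_iff₀ (Real.exp_pos _)] at hlt
    linarith
  · have hu : (uMat x).mulVec (fun i => ((Fin.cons q₀ q : Fin (n + 1) → ℤ) i : ℝ)) l.succ =
        q l := by
      simp [Matrix.mulVec, dotProduct, uMat]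
    rw [hu, if_neg (Fin.succ_ne_zero l), abs_of_pos (Real.exp_pos _)]
    calc Real.exp (-(k : ℝ)) * |(q l : ℝ)|
        ≤ Real.exp (-(k : ℝ)) * (ε / 2 * Real.exp (k : ℝ)) := by
          gcongr
          exact hle l
      _ = ε / 2 := by
          rw [Real.exp_neg]
          field_simp
      _ < ε := by linarith

end Flow

/-- Quantitative nondivergence criterion for singularity: under conditions (1) and (2),
the set of `x ∈ B` with `f(x)` singular has `μ`-measure zero. -/
theorem stmt_6 {X : Type*} [MetricSpace X] [MeasurableSpace X] [BorelSpace X]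
    (hX : IsBesicovitchSpace X) (n : ℕ) (hn : 1 ≤ n)
    (x₀ : X) (r₀ : ℝ) (hr₀ : 0 < r₀) (μ : Measure X) [μ.Regular]
    (D : ℝ) (hD : 0 < D)
    -- μ is D-Federer on B̃ = B(x₀, 3^{n+1} r₀)
    (hFed : ∀ y ∈ measSupport μ, ∀ ρ : ℝ, 0 < ρ →
      Metric.ball y (3 * ρ) ⊆ Metric.ball x₀ ((3 : ℝ) ^ (n+1) * r₀) →
      μ (Metric.ball y (3 * ρ)) ≤ ENNReal.ofReal D * μ (Metric.ball y ρ))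
    (f : X → Fin n → ℝ) (hf : ContinuousOn f (Metric.ball x₀ ((3 : ℝ) ^ (n+1) * r₀)))
    -- (1): all the functions x ↦ cov(g_k u_{f(x)} Γ) are (C,α)-good on B̃ w.r.t. μ
    (C α : ℝ) (hC : 0 < C) (hα : 0 < α)
    (h1 : ∀ k : ℕ, ∀ rk : ℕ, 1 ≤ rk → ∀ v : Fin rk → Fin (n+1) → ℤ, IsPrimitiveBasis v →
      IsCAGoodOn μ C α (fun x => covFam (gMat n k * uMat (f x)) v)
        (Metric.ball x₀ ((3 : ℝ) ^ (n+1) * r₀)))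
    -- (2): sup over B ∩ supp μ of cov(g_{k_i} u_{f(x)} Γ) is at least c^{rank Γ}
    (c : ℝ) (hc : 0 < c) (k : ℕ → ℕ) (hk : Tendsto k atTop atTop)
    (h2 : ∀ i : ℕ, ∀ rk : ℕ, 1 ≤ rk → ∀ v : Fin rk → Fin (n+1) → ℤ, IsPrimitiveBasis v →
      c ^ rk ≤ sSup ((fun x => covFam (gMat n (k i) * uMat (f x)) v) ''
        (Metric.ball x₀ r₀ ∩ measSupport μ))) :
    μ {x ∈ Metric.ball x₀ r₀ | IsSingularVec (f x)} = 0 := by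
  obtain ⟨N, hN⟩ := hX
  set B := Metric.ball x₀ r₀ with hB
  have hnull := measure_bounded_diff_measSupport (μ := μ) ⟨N, hN⟩
    (Metric.isBounded_ball (x := x₀) (r := r₀))
  suffices hsupp : μ {x ∈ B ∩ measSupport μ | IsSingularVec (f x)} = 0 by
    refine measure_mono_null ?_ (measure_union_null hnull hsupp)
    rintro x ⟨hxB, hx⟩
    by_cases hxs : x ∈ measSupport μ
    · exact Or.inr ⟨⟨hxB, hxs⟩, hx⟩
    · exact Or.inl ⟨hxB, hxs⟩
  rcases (B ∩ measSupport μ).eq_empty_or_nonempty with hemp | ⟨y, hyB, hys⟩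
  · simp [hemp]
  have hne : (B ∩ measSupport μ).Nonempty := ⟨y, hyB, hys⟩
  have hpow : (9 : ℝ) ≤ 3 ^ (n + 1) := by
    calc (9 : ℝ) = 3 ^ (1 + 1) := by norm_num
      _ ≤ 3 ^ (n + 1) := pow_le_pow_right₀ (by norm_num) (by omega)
  have hMfin : μ (Metric.ball x₀ (3 * r₀)) < ∞ := by
    have hyd : dist y x₀ < r₀ := hyB
    refine (measure_mono (Metric.ball_subset_ball' (ε₂ := 4 * r₀) (y := y) ?_)).trans_lt
      (measure_ball_lt_top_of_federer hFed hys (Metric.ball_subset_ball' ?_))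
    · rw [dist_comm]
      linarith
    · nlinarith
  set ρ := min (c / 2) 1 with hρdef
  have hρ : 0 < ρ := lt_min (by positivity) one_pos
  have hρc : ρ < c := (min_le_left _ _).trans_lt (by linarith)
  set K := nondivConst N D C n * μ (Metric.ball x₀ (3 * r₀)) with hK
  have hKfin : K ≠ ∞ := ENNReal.mul_ne_top (nondivConst_ne_top N D C n) hMfin.ne
  have hbound : ∀ τ : ℝ, 0 < τ → τ ≤ 1 →
      μ {x ∈ B ∩ measSupport μ | IsSingularVec (f x)} ≤ K * ENNReal.ofReal (τ ^ α) := by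
    intro τ hτ hτ1
    set A : ℕ → Set X := fun i => {x ∈ B ∩ measSupport μ |
      ¬ IsMarked (fun (W : Submodule ℚ (Fin (n + 1) → ℚ)) y =>
        covFam (gMat n (k i) * uMat (f y)) (intBasis W))
      (fun W => ρ ^ Module.finrank ℚ W) τ {W | W ≠ ⊥ ∧ W ≠ ⊤} x} with hA
    have hAle : ∀ i, μ (A i) ≤ K * ENNReal.ofReal (τ ^ α) := by
      intro i
      have hrk : ∀ W ∈ {W : Submodule ℚ (Fin (n + 1) → ℚ) | W ≠ ⊥ ∧ W ≠ ⊤},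
          1 ≤ Module.finrank ℚ W := fun W hW =>
        Nat.one_le_iff_ne_zero.2 fun h0 => hW.1 (Submodule.finrank_eq_zero.1 h0)
      have := measure_not_isMarked_le hN hFed hC hα hτ (P := Submodule ℚ (Fin (n + 1) → ℚ))
        (ψ := fun W y => covFam (gMat n (k i) * uMat (f y)) (intBasis W))
        (η := fun W => ρ ^ Module.finrank ℚ W) (fun W => by positivity)
        (fun W x => covFam_nonneg _ _) (S₀ := {W | W ≠ ⊥ ∧ W ≠ ⊤})
        (fun W hW => h1 (k i) _ (hrk W hW) _ (isPrimitiveBasis_intBasis W))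
        (fun W _ y hy hlt => (hf.continuousAt
          (Metric.isOpen_ball.mem_nhds hy)).eventually (eventually_covFam_lt hlt))
        n _ subset_rfl
        (fun F hF _ hchain => ncard_le_of_isChain hF hchain)
        x₀ r₀ hr₀ subset_rfl
        (fun W hW => by
          have hsup := h2 i _ (hrk W hW) _ (isPrimitiveBasis_intBasis W)
          have hlt : ρ ^ Module.finrank ℚ W < c ^ Module.finrank ℚ W :=
            pow_lt_pow_left₀ hρc hρ.le (Nat.one_le_iff_ne_zero.1 (hrk W hW))
          obtain ⟨_, ⟨x, hx, rfl⟩, hxlt⟩ := exists_lt_of_lt_csSup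
            (Set.Nonempty.image _ hne) (hlt.trans_le hsup)
          exact ⟨x, hx, hxlt.le⟩)
      refine this.trans (le_of_eq ?_)
      rw [hK]
      ring
    have hsub : {x ∈ B ∩ measSupport μ | IsSingularVec (f x)} ⊆ ⋃ i, ⋂ l ≥ i, A l := by
      rintro x ⟨hxB, hx⟩
      have hev := hk.eventually (hx.eventually_exists_short
        (show 0 < τ * ρ / ((n + 1 : ℕ) + 1) by positivity))
      obtain ⟨i, hi⟩ := eventually_atTop.1 hev
      refine Set.mem_iUnion.2 ⟨i, Set.mem_iInter₂.2 fun l hl => ⟨hxB, fun hm => ?_⟩⟩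
      obtain ⟨q, hq0, hq⟩ := hi l hl
      obtain ⟨a, ha⟩ := IsMarked.exists_le_abs_mulVec
        (h := fun y => gMat n (k l) * uMat (f y)) (det_gMat_mul_uMat n (k l) (f x)) hρ
        (min_le_right _ _) hτ hτ1 hm hq0
      exact absurd ha (not_le.2 (hq a))
    refine (measure_mono hsub).trans ?_
    have hmono : Monotone fun i => ⋂ l ≥ i, A l := fun i i' hii' =>
      Set.biInter_subset_biInter_left fun l hl => le_trans hii' hl
    rw [hmono.measure_iUnion]
    exact iSup_le fun i => (measure_mono (Set.biInter_subset_of_mem (le_refl i))).trans (hAle i)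
  have hlim : Tendsto (fun τ : ℝ => K * ENNReal.ofReal (τ ^ α)) (nhdsWithin 0 (Set.Ioi 0))
      (nhds 0) := by
    have h0 : Tendsto (fun τ : ℝ => τ ^ α) (nhds 0) (nhds 0) := by
      have := (Real.continuousAt_rpow_const 0 α (Or.inr hα.le)).tendsto
      rwa [Real.zero_rpow hα.ne'] at this
    have h3 := ENNReal.Tendsto.const_mul (ENNReal.tendsto_ofReal h0) (Or.inr hKfin)
    simp only [ENNReal.ofReal_zero, mul_zero] at h3
    exact h3.mono_left nhdsWithin_le_nhds
  refine le_antisymm (ge_of_tendsto hlim ?_) zero_le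
  filter_upwards [Ioc_mem_nhdsGT (zero_lt_one' ℝ)] with τ hτ
  exact hbound τ hτ.1 hτ.2
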